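/- For every real x one has 45x⁸ − 90x⁶ + 60x⁴ − 15x² + 1 = 45(x² − a²)(x² − b²)(x² − c²)(x² − d²); that is, ±a, ±b, ±c, ±d are exactly the eight roots of the polynomial 45x⁸ − 90x⁶ + 60x⁴ − 15x² + 1. -/

import Mathlib

noncomputable section
open Real Complex

namespace Triacontagonal

/-- The golden ratio. -/
def τ : ℝ := (1 + Real.sqrt 5) / 2

/-- The constant 3^(-1/2) * 5^(-1/4). -/
def k0 : ℝ := (3 : ℝ) ^ (-(1:ℝ)/2) * (5 : ℝ) ^ (-(1:ℝ)/4)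

/-- `a` is the positive real with 2a² = 1 + 3^(-1/2)·5^(-1/4)·τ^(3/2). -/
def a : ℝ := Real.sqrt ((1 + k0 * τ ^ ((3:ℝ)/2)) / 2)

/-- `b` is the positive real with 2b² = 1 + 3^(-1/2)·5^(-1/4)·τ^(-3/2). -/
def b : ℝ := Real.sqrt ((1 + k0 * τ ^ (-((3:ℝ)/2))) / 2)

/-- `c` is the positive real with 2c² = 1 - 3^(-1/2)·5^(-1/4)·τ^(-3/2). -/
def c : ℝ := Real.sqrt ((1 - k0 * τ ^ (-((3:ℝ)/2))) / 2)

/-- `d` is the positive real with 2d² = 1 - 3^(-1/2)·5^(-1/4)·τ^(3/2). -/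
def d : ℝ := Real.sqrt ((1 - k0 * τ ^ ((3:ℝ)/2)) / 2)

/-!
In the variable `y = 2x² - 1` the octic becomes `(45y⁴ - 30y² + 1) / 16`, a quadratic in `y²`. By
Vieta it has the roots `y = ±u, ±v` as soon as `u² + v² = 2/3` and `(uv)² = 1/45`. For
`u, v = k0 τ^(±3/2)` the product is `uv = k0² = 1/(3√5)`, and Binet's formula gives
`τ³ + τ⁻³ = √5 F₃ = 2√5`, hence `u² + v² = 2/3`.
-/

lemma goldenRatio_pow_add_inv_pow_of_odd {n : ℕ} (hn : Odd n) :
    goldenRatio ^ n + (goldenRatio ^ n)⁻¹ = √5 * n.fib := by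
  have binet : (n.fib : ℝ) = (goldenRatio ^ n - goldenConj ^ n) / √5 := coe_fib_eq n
  rw [binet, mul_div_cancel₀ _ (by positivity), ← inv_pow, inv_goldenRatio, hn.neg_pow,
    sub_eq_add_neg]

lemma octic_eq_prod {K : Type*} [Field K] [CharZero K] {u v : K}
    (hsum : u ^ 2 + v ^ 2 = 2 / 3) (hprod : (u * v) ^ 2 = 1 / 45) (x : K) :
    45 * x ^ 8 - 90 * x ^ 6 + 60 * x ^ 4 - 15 * x ^ 2 + 1 =
      45 * (x ^ 2 - (1 + u) / 2) * (x ^ 2 - (1 + v) / 2) * (x ^ 2 - (1 - v) / 2) *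
        (x ^ 2 - (1 - u) / 2) := by
  linear_combination 45 / 16 * (2 * x ^ 2 - 1) ^ 2 * hsum - 45 / 16 * hprod

lemma setOf_mul_sq_sub_sq_eq_zero {R : Type*} [CommRing R] [NoZeroDivisors R] {k : R}
    (hk : k ≠ 0) (p q r s : R) :
    {x : R | k * (x ^ 2 - p ^ 2) * (x ^ 2 - q ^ 2) * (x ^ 2 - r ^ 2) * (x ^ 2 - s ^ 2) = 0} =
      {p, -p, q, -q, r, -r, s, -s} := by
  ext x
  simp only [Set.mem_ofPred_eq, Set.mem_insert_iff, Set.mem_singleton_iff, mul_eq_zero, hk,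
    false_or, sub_eq_zero, sq_eq_sq_iff_eq_or_eq_neg, or_assoc]

lemma abs_le_one_of_sq_add_sq_le_one {R : Type*} [CommRing R] [LinearOrder R]
    [IsStrictOrderedRing R] {u v : R} (h : u ^ 2 + v ^ 2 ≤ 1) : |u| ≤ 1 :=
  (sq_le_one_iff_abs_le_one u).1 ((le_add_of_nonneg_right (sq_nonneg v)).trans h)

lemma sq_sqrt_one_add_div_two {u : ℝ} (hu : |u| ≤ 1) : √((1 + u) / 2) ^ 2 = (1 + u) / 2 :=
  sq_sqrt (by linarith [neg_le_of_abs_le hu])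

lemma sq_sqrt_one_sub_div_two {u : ℝ} (hu : |u| ≤ 1) : √((1 - u) / 2) ^ 2 = (1 - u) / 2 :=
  sq_sqrt (by linarith [le_of_abs_le hu])

lemma τ_eq_goldenRatio : τ = goldenRatio := rfl

lemma τ_pos : 0 < τ := goldenRatio_pos

lemma τ_rpow_sq_add_rpow_neg_sq :
    (τ ^ ((3 : ℝ) / 2)) ^ 2 + (τ ^ (-((3 : ℝ) / 2))) ^ 2 = 2 * √5 := by
  have sq_rpow : (τ ^ ((3 : ℝ) / 2)) ^ 2 = τ ^ 3 := by
    rw [← rpow_mul_natCast τ_pos.le, ← rpow_natCast]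
    norm_num
  rw [rpow_neg τ_pos.le, inv_pow, sq_rpow, τ_eq_goldenRatio,
    goldenRatio_pow_add_inv_pow_of_odd (by decide), mul_comm]
  norm_num [Nat.fib]

lemma k0_sq : k0 ^ 2 = 1 / (3 * √5) := by
  have sq_rpow_three : ((3 : ℝ) ^ (-(1 : ℝ) / 2)) ^ 2 = 3⁻¹ := by
    rw [← rpow_mul_natCast (by norm_num), ← rpow_neg_one]
    norm_num
  have sq_rpow_five : ((5 : ℝ) ^ (-(1 : ℝ) / 4)) ^ 2 = (√5)⁻¹ := by
    rw [← rpow_mul_natCast (by norm_num), sqrt_eq_rpow, ← rpow_neg (by norm_num)]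
    norm_num
  rw [k0, mul_pow, sq_rpow_three, sq_rpow_five, one_div, mul_inv]

lemma k0_mul_rpow_sq_add_sq :
    (k0 * τ ^ ((3 : ℝ) / 2)) ^ 2 + (k0 * τ ^ (-((3 : ℝ) / 2))) ^ 2 = 2 / 3 := by
  rw [mul_pow, mul_pow, ← mul_add, τ_rpow_sq_add_rpow_neg_sq, k0_sq]
  field_simp

lemma k0_mul_rpow_mul_sq :
    ((k0 * τ ^ ((3 : ℝ) / 2)) * (k0 * τ ^ (-((3 : ℝ) / 2)))) ^ 2 = 1 / 45 := by
  have mul_eq : (k0 * τ ^ ((3 : ℝ) / 2)) * (k0 * τ ^ (-((3 : ℝ) / 2))) = k0 ^ 2 := by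
    rw [mul_mul_mul_comm, ← rpow_add τ_pos, add_neg_cancel, rpow_zero, mul_one, sq]
  rw [mul_eq, k0_sq, div_pow, mul_pow, sq_sqrt (by norm_num)]
  norm_num

lemma abs_k0_mul_rpow_le_one : |k0 * τ ^ ((3 : ℝ) / 2)| ≤ 1 :=
  abs_le_one_of_sq_add_sq_le_one (k0_mul_rpow_sq_add_sq.trans_le (by norm_num))

lemma abs_k0_mul_rpow_neg_le_one : |k0 * τ ^ (-((3 : ℝ) / 2))| ≤ 1 :=
  abs_le_one_of_sq_add_sq_le_one
    (((add_comm _ _).trans k0_mul_rpow_sq_add_sq).trans_le (by norm_num))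

lemma a_sq : a ^ 2 = (1 + k0 * τ ^ ((3 : ℝ) / 2)) / 2 :=
  sq_sqrt_one_add_div_two abs_k0_mul_rpow_le_one

lemma b_sq : b ^ 2 = (1 + k0 * τ ^ (-((3 : ℝ) / 2))) / 2 :=
  sq_sqrt_one_add_div_two abs_k0_mul_rpow_neg_le_one

lemma c_sq : c ^ 2 = (1 - k0 * τ ^ (-((3 : ℝ) / 2))) / 2 :=
  sq_sqrt_one_sub_div_two abs_k0_mul_rpow_neg_le_one

lemma d_sq : d ^ 2 = (1 - k0 * τ ^ ((3 : ℝ) / 2)) / 2 :=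
  sq_sqrt_one_sub_div_two abs_k0_mul_rpow_le_one

/-- the polynomial 45x⁸ − 90x⁶ + 60x⁴ − 15x² + 1 factors as
45(x²−a²)(x²−b²)(x²−c²)(x²−d²), so ±a, ±b, ±c, ±d are exactly its roots. -/
theorem stmt2 :
    (∀ x : ℝ, 45 * x ^ 8 - 90 * x ^ 6 + 60 * x ^ 4 - 15 * x ^ 2 + 1 =
      45 * (x ^ 2 - a ^ 2) * (x ^ 2 - b ^ 2) * (x ^ 2 - c ^ 2) * (x ^ 2 - d ^ 2)) ∧
    {x : ℝ | 45 * x ^ 8 - 90 * x ^ 6 + 60 * x ^ 4 - 15 * x ^ 2 + 1 = 0} =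
      {a, -a, b, -b, c, -c, d, -d} := by
  have factorization (x : ℝ) : 45 * x ^ 8 - 90 * x ^ 6 + 60 * x ^ 4 - 15 * x ^ 2 + 1 =
      45 * (x ^ 2 - a ^ 2) * (x ^ 2 - b ^ 2) * (x ^ 2 - c ^ 2) * (x ^ 2 - d ^ 2) := by
    rw [a_sq, b_sq, c_sq, d_sq]
    exact octic_eq_prod k0_mul_rpow_sq_add_sq k0_mul_rpow_mul_sq x
  refine ⟨factorization, ?_⟩
  simp only [factorization]
  exact setOf_mul_sq_sub_sq_eq_zero (by norm_num) a b c d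

end Triacontagonal
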